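/- Let n ≥ 3 and let x ∈ ℝ^E be nonnegative edge weights on the complete graph K_n satisfying the cut constraints Σ_{e∈δ(S)} x_e ≥ 2 for every vertex set S with ∅ ⊊ S ⊊ V (no degree constraints are assumed). Let X be the symmetric weighted adjacency matrix with X_{ij} = X_{ji} = x_{{i,j}} and zero diagonal, and let L(X) be its Laplacian. Then det(L(X)_{−1}) = Σ_{T∈𝒯_n} ∏_{e∈T} x_e ≥ n. -/

import Mathlib

/-!
**Lower bound.** For a forest `F` let `τ_F = ∑_{T ⊇ F} ∏_{e ∈ T \ F} x_e` (`treeWeightAbove`), the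
spanning-tree weight of the graph with `F` contracted. It is homogeneous of degree
`d = n - 1 - #F`, so Euler's identity reads `d τ_F = ∑_{e ∉ F} x_e τ_{F ∪ e}`. The claim
`τ_F ≥ n - #F` follows by induction on `d`: if `e` joins two components of `F` then
`τ_{F ∪ e} ≥ d`, hence `τ_F` is at least the total weight of the edges between components of `F`.
There are at least `n - #F ≥ 2` components, each with cut weight at least `2`, and an edge lies
in the cuts of at most two of them, so this total weight is at least `n - #F`
(`card_le_sum_crossing`). The case `F = ∅` is the bound.

**Matrix-tree theorem.** Root the graph at the first vertex. Row `i` of the reduced Laplacian is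
`∑ k, x_{ik} (e_i - e_k)` with `e_root = 0`, so by multilinearity its determinant is the sum over
all functions `p` from non-root vertices to vertices of `∏ x_{i, p i}` times the determinant of the
matrix with rows `e_i - e_{p i}`. That determinant is `1` if following `p` always leads to the root
and `0` otherwise, and the functions of the first kind are exactly the parent functions of the
spanning trees (`det_eq_treeWeight`).
-/

open scoped Classical

/-- `e` is an edge of the cut `δ(S)`: it has exactly one endpoint in `S`. -/
def InCut {n : ℕ} (S : Finset (Fin n)) (e : Sym2 (Fin n)) : Prop :=
  ∃ i j : Fin n, e = s(i, j) ∧ i ∈ S ∧ j ∉ S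

/-- The total weight `Σ_{e ∈ δ(S)} x_e` of the cut determined by `S`. -/
noncomputable def cutSum {n : ℕ} (x : Sym2 (Fin n) → ℝ) (S : Finset (Fin n)) : ℝ :=
  ∑ e ∈ Finset.univ.filter (fun e => InCut S e), x e

/-- `T` is (the edge set of) a spanning tree of the complete graph on `Fin n`. -/
def IsSpanningTreeEdgeSet {n : ℕ} (T : Finset (Sym2 (Fin n))) : Prop :=
  (∀ e ∈ T, ¬ e.IsDiag) ∧
  (SimpleGraph.fromEdgeSet (↑T : Set (Sym2 (Fin n)))).IsTree

/-- The aggregate weight of spanning trees, `Σ_{T ∈ 𝒯_n} ∏_{e ∈ T} x_e`. -/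
noncomputable def treeWeight {n : ℕ} (x : Sym2 (Fin n) → ℝ) : ℝ :=
  ∑ T ∈ Finset.univ.filter (fun T : Finset (Sym2 (Fin n)) => IsSpanningTreeEdgeSet T),
    ∏ e ∈ T, x e

/-- The embedding `Fin (n-1) → Fin n` skipping the first index, used to delete
the first row and column of an `n × n` matrix. -/
def delFirst (n : ℕ) (hn : 0 < n) (i : Fin (n - 1)) : Fin n :=
  Fin.cast (Nat.succ_pred_eq_of_pos hn) i.succ


open Finset

/-! ### Spanning trees as edge sets -/

lemma edgeSet_fromEdgeSet_of_loopless {n : ℕ} {F : Finset (Sym2 (Fin n))}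
    (hd : ∀ e ∈ F, ¬ e.IsDiag) :
    (SimpleGraph.fromEdgeSet (↑F : Set (Sym2 (Fin n)))).edgeSet = ↑F := by
  rw [SimpleGraph.edgeSet_fromEdgeSet]
  ext e
  simp only [Set.mem_sdiff, Finset.mem_coe, Sym2.mem_diagSet]
  exact ⟨fun h => h.1, fun h => ⟨h, hd e h⟩⟩

lemma card_of_isSpanningTreeEdgeSet {n : ℕ} {T : Finset (Sym2 (Fin n))}
    (hT : IsSpanningTreeEdgeSet T) : T.card + 1 = n := by
  have h := (SimpleGraph.isTree_iff_connected_and_card.1 hT.2).2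
  rw [edgeSet_fromEdgeSet_of_loopless hT.1] at h
  simpa using h

/-- A forest with `n - 1` edges is a spanning tree, since it extends to one. -/
lemma isSpanningTreeEdgeSet_of_acyclic {n : ℕ} {F : Finset (Sym2 (Fin n))}
    (hd : ∀ e ∈ F, ¬ e.IsDiag)
    (hF : (SimpleGraph.fromEdgeSet (↑F : Set (Sym2 (Fin n)))).IsAcyclic)
    (hcard : F.card + 1 = n) : IsSpanningTreeEdgeSet F := by
  have : Nonempty (Fin n) := ⟨⟨0, by omega⟩⟩
  obtain ⟨G, hFG, -, hG⟩ :=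
    SimpleGraph.Connected.exists_isTree_le_of_le_of_isAcyclic
      (G := (⊤ : SimpleGraph (Fin n))) SimpleGraph.connected_top le_top hF
  have hGc := hG.card_edgeFinset
  have hsub : F ⊆ G.edgeFinset := by
    intro e he
    rw [SimpleGraph.mem_edgeFinset]
    apply SimpleGraph.edgeSet_mono hFG
    rw [edgeSet_fromEdgeSet_of_loopless hd]
    exact he
  have heq : F = G.edgeFinset := by
    apply Finset.eq_of_subset_of_card_le hsub
    simp only [Fintype.card_fin] at hGc
    omega
  refine ⟨hd, ?_⟩
  have : SimpleGraph.fromEdgeSet (↑F : Set (Sym2 (Fin n))) = G := by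
    rw [heq, SimpleGraph.coe_edgeFinset, SimpleGraph.fromEdgeSet_edgeSet]
  rwa [this]

/-! ### The lower bound by contraction -/

/-- The edges joining two different classes of the colouring `f`. -/
noncomputable def crossing {n : ℕ} (f : Fin n → Fin n) : Finset (Sym2 (Fin n)) :=
  univ.filter fun e => ¬ (e.map f).IsDiag

/-- Each class of `f` has cut weight at least `2`, and an edge lies in the cuts of at most two
classes. -/
lemma card_le_sum_crossing {n : ℕ} {x : Sym2 (Fin n) → ℝ}
    (hx0 : ∀ e : Sym2 (Fin n), ¬ e.IsDiag → 0 ≤ x e)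
    (hcut : ∀ S : Finset (Fin n), S.Nonempty → S ≠ Finset.univ → 2 ≤ cutSum x S)
    (f : Fin n → Fin n) (hf : 2 ≤ (univ.image f).card) :
    ((univ.image f).card : ℝ) ≤ ∑ e ∈ crossing f, x e := by
  have h1 : ∀ c ∈ univ.image f, (2 : ℝ) ≤ cutSum x (univ.filter fun v => f v = c) := by
    intro c hc
    apply hcut
    · obtain ⟨v, -, hv⟩ := mem_image.1 hc
      exact ⟨v, by simp [hv]⟩
    · intro h
      obtain ⟨b, hb, hbc⟩ := Finset.exists_mem_ne (s := univ.image f) (by omega) c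
      obtain ⟨v, -, hv⟩ := mem_image.1 hb
      have : v ∈ (univ.filter fun v => f v = c) := by rw [h]; simp
      simp at this
      exact hbc (hv ▸ this)
  have h2 : ∑ c ∈ univ.image f, cutSum x (univ.filter fun v => f v = c)
      ≤ ∑ e ∈ crossing f, 2 * x e := by
    have hle : ∀ c, cutSum x (univ.filter fun v => f v = c)
        = ∑ e ∈ crossing f, if InCut (univ.filter fun v => f v = c) e then x e else 0 := by
      intro c
      rw [cutSum, ← Finset.sum_filter]
      apply Finset.sum_congr _ fun _ _ => rfl
      ext e
      simp only [crossing, mem_filter, mem_univ, true_and, iff_and_self]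
      rintro ⟨i, j, rfl, hi, hj⟩
      simp at hi hj ⊢
      rw [hi]; exact fun h => hj h.symm
    simp_rw [hle]
    rw [Finset.sum_comm]
    apply Finset.sum_le_sum
    intro e he
    have hxe : 0 ≤ x e := by
      apply hx0
      intro h
      simp only [crossing, mem_filter, mem_univ, true_and] at he
      exact he (h.map)
    rw [← Finset.sum_filter, Finset.sum_const, nsmul_eq_mul]
    apply mul_le_mul_of_nonneg_right _ hxe
    induction e with
    | _ u v =>
    have : ((univ.image f).filter
        fun c => InCut (univ.filter fun v => f v = c) s(u, v)) ⊆ {f u, f v} := by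
      intro c hc
      obtain ⟨i, j, hij, hi, -⟩ := (mem_filter.1 hc).2
      simp at hi
      rcases Sym2.eq_iff.1 hij with h | h
      · simp [h.1, hi]
      · simp [h.2, hi]
    exact_mod_cast (card_le_card this).trans card_le_two
  have h3 := Finset.sum_le_sum h1
  rw [Finset.sum_const, nsmul_eq_mul] at h3
  rw [← Finset.mul_sum] at h2
  linarith

/-- The aggregate weight of the spanning trees containing `F`, the edges of `F` counting with
weight one. This is the spanning-tree weight of the graph with `F` contracted. -/
noncomputable def treeWeightAbove {n : ℕ} (x : Sym2 (Fin n) → ℝ) (F : Finset (Sym2 (Fin n))) : ℝ :=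
  ∑ T ∈ univ.filter (fun T : Finset (Sym2 (Fin n)) => IsSpanningTreeEdgeSet T ∧ F ⊆ T),
    ∏ e ∈ T \ F, x e

lemma prod_nonneg_of_tree {n : ℕ} {x : Sym2 (Fin n) → ℝ}
    (hx0 : ∀ e : Sym2 (Fin n), ¬ e.IsDiag → 0 ≤ x e) {T F : Finset (Sym2 (Fin n))}
    (hT : IsSpanningTreeEdgeSet T) : 0 ≤ ∏ e ∈ T \ F, x e :=
  Finset.prod_nonneg fun e he => hx0 e (hT.1 e (mem_sdiff.1 he).1)

lemma treeWeightAbove_nonneg {n : ℕ} {x : Sym2 (Fin n) → ℝ}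
    (hx0 : ∀ e : Sym2 (Fin n), ¬ e.IsDiag → 0 ≤ x e) (F : Finset (Sym2 (Fin n))) :
    0 ≤ treeWeightAbove x F :=
  Finset.sum_nonneg fun _ hT => prod_nonneg_of_tree hx0 (mem_filter.1 hT).2.1

/-- Euler's identity for `treeWeightAbove · F`, a homogeneous polynomial of degree `d`. -/
lemma euler_treeWeightAbove {n : ℕ} (x : Sym2 (Fin n) → ℝ) {F : Finset (Sym2 (Fin n))} {d : ℕ}
    (hd : F.card + d + 1 = n) :
    (d : ℝ) * treeWeightAbove x F = ∑ e ∈ univ \ F, x e * treeWeightAbove x (insert e F) := by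
  have h1 : (d : ℝ) * treeWeightAbove x F =
      ∑ T ∈ univ.filter (fun T : Finset (Sym2 (Fin n)) => IsSpanningTreeEdgeSet T ∧ F ⊆ T),
        ∑ e ∈ T \ F, x e * ∏ g ∈ T \ insert e F, x g := by
    rw [treeWeightAbove, Finset.mul_sum]
    apply Finset.sum_congr rfl
    intro T hT
    obtain ⟨hT, hFT⟩ := (mem_filter.1 hT).2
    have : ∀ e ∈ T \ F, x e * ∏ g ∈ T \ insert e F, x g = ∏ g ∈ T \ F, x g := by
      intro e he
      rw [← Finset.mul_prod_erase _ _ he]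
      congr 2
      ext g
      simp only [mem_sdiff, mem_insert, mem_erase]
      tauto
    rw [Finset.sum_congr rfl this, Finset.sum_const, nsmul_eq_mul]
    congr 2
    have := card_of_isSpanningTreeEdgeSet hT
    rw [Finset.card_sdiff_of_subset hFT]
    omega
  rw [h1]
  simp_rw [treeWeightAbove, Finset.mul_sum]
  apply Finset.sum_comm'
  intro T e
  simp only [mem_filter, mem_univ, true_and, mem_sdiff, insert_subset_iff]
  tauto

lemma color_eq_of_reachable {n : ℕ} {F : Finset (Sym2 (Fin n))} {f : Fin n → Fin n}
    (hfF : ∀ e ∈ F, (e.map f).IsDiag) {u v : Fin n}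
    (h : (SimpleGraph.fromEdgeSet (↑F : Set (Sym2 (Fin n)))).Reachable u v) : f u = f v := by
  obtain ⟨w⟩ := h
  induction w with
  | nil => rfl
  | cons hadj _ ih =>
    rw [← ih]
    simpa using hfF _ ((SimpleGraph.fromEdgeSet_adj _).1 hadj).1

/-- For a forest `F`, the spanning trees containing `F` have aggregate weight at least
`n - #F = d + 1`, where `d` is the number of edges missing from `F`, the induction variable.
The colouring `f`, constant on the components of `F` and with at least `d + 1` colours, keeps track
of the vertices of the graph with `F` contracted. -/
lemma le_treeWeightAbove {n : ℕ} {x : Sym2 (Fin n) → ℝ}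
    (hx0 : ∀ e : Sym2 (Fin n), ¬ e.IsDiag → 0 ≤ x e)
    (hcut : ∀ S : Finset (Fin n), S.Nonempty → S ≠ Finset.univ → 2 ≤ cutSum x S) (d : ℕ) :
    ∀ (F : Finset (Sym2 (Fin n))) (f : Fin n → Fin n), (∀ e ∈ F, ¬ e.IsDiag) →
      (SimpleGraph.fromEdgeSet (↑F : Set (Sym2 (Fin n)))).IsAcyclic →
      (∀ e ∈ F, (e.map f).IsDiag) → F.card + d + 1 = n → d + 1 ≤ (univ.image f).card →
      (d : ℝ) + 1 ≤ treeWeightAbove x F := by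
  induction d with
  | zero =>
    intro F f hFd hF _ hcard _
    have hT := isSpanningTreeEdgeSet_of_acyclic hFd hF hcard
    rw [treeWeightAbove]
    refine le_trans ?_ (Finset.single_le_sum (f := fun T => ∏ e ∈ T \ F, x e)
      (fun T hT' => prod_nonneg_of_tree hx0 (mem_filter.1 hT').2.1)
      (mem_filter.2 ⟨mem_univ F, hT, subset_rfl⟩))
    simp
  | succ d ih =>
    intro F f hFd hF hfF hcard himg
    have hstep : ∀ e ∈ crossing f, (d : ℝ) + 1 ≤ treeWeightAbove x (insert e F) := by
      intro e he
      simp only [crossing, mem_filter, mem_univ, true_and] at he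
      have heF : e ∉ F := fun h => he (hfF e h)
      have hed : ¬ e.IsDiag := fun h => he h.map
      induction e with
      | _ u v =>
      have huv : f u ≠ f v := by simpa using he
      -- merge the colour class of `u` into that of `v`
      let r : Fin n → Fin n := fun c => if c = f u then f v else c
      refine ih (insert s(u, v) F) (r ∘ f) ?_ ?_ ?_ ?_ ?_
      · intro e' he'
        rcases mem_insert.1 he' with rfl | h
        · exact hed
        · exact hFd _ h
      · have hnr : ¬ (SimpleGraph.fromEdgeSet (↑F : Set (Sym2 (Fin n)))).Reachable u v :=
          fun h => huv (color_eq_of_reachable hfF h)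
        have := hF.sup_edge_of_not_reachable hnr
        rwa [SimpleGraph.edge, ← SimpleGraph.fromEdgeSet_union, Set.union_singleton,
          ← Finset.coe_insert] at this
      · intro e' he'
        rw [← Sym2.map_map]
        rcases mem_insert.1 he' with rfl | h
        · simp [r]
        · exact (hfF _ h).map
      · rw [card_insert_of_notMem heF]; omega
      · have hsub : (univ.image f).erase (f u) ⊆ univ.image (r ∘ f) := by
          intro c hc
          obtain ⟨hcu, hc⟩ := mem_erase.1 hc
          obtain ⟨w, -, rfl⟩ := mem_image.1 hc
          exact mem_image.2 ⟨w, mem_univ _, by simp [r, hcu]⟩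
        have := card_le_card hsub
        rw [card_erase_of_mem (mem_image_of_mem f (mem_univ u))] at this
        omega
    have hx : ∀ e ∈ crossing f, 0 ≤ x e := by
      intro e he
      simp only [crossing, mem_filter, mem_univ, true_and] at he
      exact hx0 e fun h => he h.map
    have hsub : crossing f ⊆ univ \ F := by
      intro e he
      simp only [crossing, mem_filter, mem_univ, true_and, mem_sdiff] at he ⊢
      exact fun h => he (hfF e h)
    have hcross := card_le_sum_crossing hx0 hcut f (by omega)
    have himg' : ((d : ℝ) + 1 + 1) ≤ ((univ.image f).card : ℝ) := by exact_mod_cast himg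
    have heuler := euler_treeWeightAbove x (F := F) (d := d + 1) hcard
    have hle : ∑ e ∈ crossing f, x e * ((d : ℝ) + 1)
        ≤ ∑ e ∈ univ \ F, x e * treeWeightAbove x (insert e F) := by
      refine (Finset.sum_le_sum fun e he =>
        mul_le_mul_of_nonneg_left (hstep e he) (hx e he)).trans ?_
      apply Finset.sum_le_sum_of_subset_of_nonneg hsub
      intro e _ _
      by_cases hed : e.IsDiag
      · -- no spanning tree contains a loop
        have : treeWeightAbove x (insert e F) = 0 := by
          apply Finset.sum_eq_zero
          intro T hT
          obtain ⟨hT, hFT⟩ := (mem_filter.1 hT).2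
          exact absurd hed (hT.1 e (hFT (mem_insert_self _ _)))
        rw [this, mul_zero]
      · exact mul_nonneg (hx0 e hed) (treeWeightAbove_nonneg hx0 _)
    rw [← heuler, ← Finset.sum_mul, mul_comm] at hle
    push_cast at hle ⊢
    have := le_of_mul_le_mul_left hle (by positivity)
    linarith

lemma le_treeWeight {n : ℕ} (hn : 1 ≤ n) {x : Sym2 (Fin n) → ℝ}
    (hx0 : ∀ e : Sym2 (Fin n), ¬ e.IsDiag → 0 ≤ x e)
    (hcut : ∀ S : Finset (Fin n), S.Nonempty → S ≠ Finset.univ → 2 ≤ cutSum x S) :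
    (n : ℝ) ≤ treeWeight x := by
  obtain ⟨d, rfl⟩ : ∃ d, n = d + 1 := ⟨n - 1, by omega⟩
  have h := le_treeWeightAbove hx0 hcut d ∅ id (by simp) (by simp) (by simp) (by simp) (by simp)
  simpa [treeWeightAbove, treeWeight] using h


/-! ### The matrix-tree theorem -/

/-- `p` is the parent function of a tree on `Fin (m + 1)` rooted at `0`: some height function
strictly decreases from every non-root vertex `i.succ` to its parent `p i`. -/
def IsParent {m : ℕ} (p : Fin m → Fin (m + 1)) : Prop :=
  ∃ h : Fin (m + 1) → ℕ, ∀ i, h (p i) < h i.succ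

/-- The matrix with rows `e_i - e_{p i}`, the root coordinate being dropped. -/
def parentMatrix {m : ℕ} (p : Fin m → Fin (m + 1)) : Matrix (Fin m) (Fin m) ℝ :=
  Matrix.of fun i j => (if i = j then 1 else 0) - (if p i = j.succ then 1 else 0)

/-- Ordering the vertices by height makes the matrix unitriangular. -/
lemma det_parentMatrix_of_isParent {m : ℕ} {p : Fin m → Fin (m + 1)} (hp : IsParent p) :
    (parentMatrix p).det = 1 := by
  obtain ⟨h, hh⟩ := hp
  have htri : (parentMatrix p).BlockTriangular (fun i => OrderDual.toDual (h i.succ)) := by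
    intro i j hij
    replace hij : h i.succ < h j.succ := hij
    have h1 : i ≠ j := by rintro rfl; exact lt_irrefl _ hij
    have h2 : p i ≠ j.succ := by
      intro h2
      have := hh i
      rw [h2] at this
      omega
    simp [parentMatrix, h1, h2]
  rw [htri.det]
  apply Finset.prod_eq_one
  intro a _
  have : (parentMatrix p).toSquareBlock (fun i => OrderDual.toDual (h i.succ)) a = 1 := by
    ext i j
    have h2 : p i.1 ≠ j.1.succ := by
      intro h2
      have h3 := hh i.1
      have h4 : h i.1.succ = h j.1.succ := OrderDual.toDual.injective (i.2.trans j.2.symm)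
      rw [h2] at h3
      omega
    simp [parentMatrix, Matrix.toSquareBlock_def, h2, Matrix.one_apply, Subtype.ext_iff]
  rw [this, Matrix.det_one]

/-- If the iterates of `p` from some vertex never reach the root, the indicator vector of the set
of all such vertices lies in the kernel. -/
lemma det_parentMatrix_of_not_isParent {m : ℕ} {p : Fin m → Fin (m + 1)} (hp : ¬ IsParent p) :
    (parentMatrix p).det = 0 := by
  let g : Fin (m + 1) → Fin (m + 1) := Fin.cases 0 p
  have hg : ∀ i : Fin m, g i.succ = p i := fun i => by simp [g]
  let R : Fin (m + 1) → Prop := fun v => ∃ k, g^[k] v = 0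
  have hR : ∀ i : Fin m, R i.succ ↔ R (p i) := by
    intro i
    constructor
    · rintro ⟨k, hk⟩
      cases k with
      | zero => exact absurd hk (Fin.succ_ne_zero i)
      | succ k => exact ⟨k, by rwa [Function.iterate_succ_apply, hg] at hk⟩
    · rintro ⟨k, hk⟩
      exact ⟨k + 1, by rwa [Function.iterate_succ_apply, hg]⟩
  have hR0 : R 0 := ⟨0, rfl⟩
  have hex : ∃ i : Fin m, ¬ R i.succ := by
    by_contra! hall
    have hall' : ∀ v, R v := fun v => Fin.cases hR0 hall v
    refine hp ⟨fun v => Nat.find (hall' v), fun i => ?_⟩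
    have hs := Nat.find_spec (hall' i.succ)
    rcases hk : Nat.find (hall' i.succ) with _ | k
    · rw [hk] at hs
      exact absurd hs (Fin.succ_ne_zero i)
    · rw [hk, Function.iterate_succ_apply, hg] at hs
      change Nat.find (hall' (p i)) < Nat.find (hall' i.succ)
      rw [hk]
      exact Nat.lt_succ_of_le (Nat.find_min' (hall' (p i)) hs)
  obtain ⟨i₀, hi₀⟩ := hex
  rw [← Matrix.exists_mulVec_eq_zero_iff]
  refine ⟨fun i => if R i.succ then 0 else 1, ?_, ?_⟩
  · intro h
    have := congrFun h i₀
    simp [hi₀] at this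
  · ext i
    have hlast : ∑ j : Fin m, (if p i = j.succ then (1 : ℝ) else 0) * (if R j.succ then 0 else 1)
        = if R (p i) then 0 else 1 := by
      rcases Fin.eq_zero_or_eq_succ (p i) with h | ⟨j, h⟩
      · rw [h, if_pos hR0]
        apply Finset.sum_eq_zero
        intro j _
        rw [if_neg (Fin.succ_ne_zero j).symm, zero_mul]
      · rw [h]
        simp only [Fin.succ_inj, ite_mul, one_mul, zero_mul, Finset.sum_ite_eq, mem_univ, if_true]
    simp only [Matrix.mulVec, dotProduct, parentMatrix, Matrix.of_apply, sub_mul,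
      Finset.sum_sub_distrib, hlast, Pi.zero_apply]
    simp only [ite_mul, one_mul, zero_mul, Finset.sum_ite_eq, mem_univ, if_true, hR i, sub_self]

/-- The edges joining each non-root vertex to its parent. -/
noncomputable def parentEdges {m : ℕ} (p : Fin m → Fin (m + 1)) : Finset (Sym2 (Fin (m + 1))) :=
  univ.image fun i => s(i.succ, p i)

lemma parentEdge_injective {m : ℕ} {p : Fin m → Fin (m + 1)} (hp : IsParent p) :
    Function.Injective fun i => s(i.succ, p i) := by
  obtain ⟨h, hh⟩ := hp
  intro i j hij
  rcases Sym2.eq_iff.1 hij with ⟨h1, -⟩ | ⟨h1, h2⟩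
  · exact Fin.succ_injective _ h1
  · have h3 := hh i
    have h4 := hh j
    rw [h2] at h3
    rw [← h1] at h4
    omega

lemma card_parentEdges {m : ℕ} {p : Fin m → Fin (m + 1)} (hp : IsParent p) :
    (parentEdges p).card = m := by
  rw [parentEdges, card_image_of_injective _ (parentEdge_injective hp)]
  simp

lemma isSpanningTreeEdgeSet_parentEdges {m : ℕ} {p : Fin m → Fin (m + 1)} (hp : IsParent p) :
    IsSpanningTreeEdgeSet (parentEdges p) := by
  have hcard := card_parentEdges hp
  obtain ⟨h, hh⟩ := hp
  have hne : ∀ i, i.succ ≠ p i := fun i hi => by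
    have := hh i
    rw [← hi] at this
    omega
  have hd : ∀ e ∈ parentEdges p, ¬ e.IsDiag := by
    intro e he
    obtain ⟨i, -, rfl⟩ := mem_image.1 he
    simpa using hne i
  refine ⟨hd, SimpleGraph.isTree_iff_connected_and_card.2 ⟨?_, ?_⟩⟩
  · set G := SimpleGraph.fromEdgeSet (↑(parentEdges p) : Set (Sym2 (Fin (m + 1))))
    have key : ∀ k v, h v = k → G.Reachable v 0 := by
      intro k
      induction k using Nat.strong_induction_on with
      | _ k ih =>
      intro v hv
      rcases Fin.eq_zero_or_eq_succ v with rfl | ⟨i, rfl⟩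
      · exact SimpleGraph.Reachable.refl _
      · have hadj : G.Adj i.succ (p i) := by
          rw [SimpleGraph.fromEdgeSet_adj]
          exact ⟨mem_coe.2 (mem_image_of_mem _ (mem_univ i)), hne i⟩
        exact hadj.reachable.trans (ih _ (hv ▸ hh i) _ rfl)
    exact ⟨fun u v => (key _ u rfl).trans (key _ v rfl).symm⟩
  · rw [edgeSet_fromEdgeSet_of_loopless hd]
    simp [hcard]

/-- A parent function is determined by its tree: by induction on the height, the edge
`{i, p i}` cannot be the `q`-edge of `p i`, as then `p (p i) = i`. -/
lemma parentEdges_injOn {m : ℕ} {p q : Fin m → Fin (m + 1)} (hp : IsParent p)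
    (hpq : parentEdges p = parentEdges q) : p = q := by
  obtain ⟨h, hh⟩ := hp
  have key : ∀ k i, h i.succ = k → p i = q i := by
    intro k
    induction k using Nat.strong_induction_on with
    | _ k ih =>
    intro i hi
    have hmem : s(i.succ, p i) ∈ parentEdges q := hpq ▸ mem_image_of_mem _ (mem_univ i)
    obtain ⟨j, -, hj⟩ := mem_image.1 hmem
    rcases Sym2.eq_iff.1 hj with ⟨h1, h2⟩ | ⟨h1, h2⟩
    · rw [← h2, Fin.succ_injective _ h1]
    · have h3 := hh i
      rw [← h1] at h3
      have h4 := ih _ (hi ▸ h3) j rfl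
      have h5 := hh j
      rw [h4, h2] at h5
      omega
  exact funext fun i => key _ i rfl

/-- Orienting a spanning tree towards the root gives its parent function. -/
lemma exists_parentEdges_eq {m : ℕ} {T : Finset (Sym2 (Fin (m + 1)))}
    (hT : IsSpanningTreeEdgeSet T) : ∃ p, IsParent p ∧ parentEdges p = T := by
  set G := SimpleGraph.fromEdgeSet (↑T : Set (Sym2 (Fin (m + 1))))
  have hconn : G.Connected := hT.2.connected
  have hex : ∀ i : Fin m, ∃ w, G.Adj i.succ w ∧ G.dist w 0 < G.dist i.succ 0 := by
    intro i
    obtain ⟨w, hw⟩ := hconn.exists_walk_length_eq_dist i.succ 0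
    cases w with
    | cons hadj w' =>
      refine ⟨_, hadj, ?_⟩
      rw [← hw, SimpleGraph.Walk.length_cons]
      exact Nat.lt_succ_of_le (SimpleGraph.dist_le w')
  choose p hadj hdist using hex
  have hp : IsParent p := ⟨fun v => G.dist v 0, hdist⟩
  refine ⟨p, hp, Finset.eq_of_subset_of_card_le ?_ ?_⟩
  · intro e he
    obtain ⟨i, -, rfl⟩ := mem_image.1 he
    exact mem_coe.1 ((SimpleGraph.fromEdgeSet_adj _).1 (hadj i)).1
  · have := card_of_isSpanningTreeEdgeSet hT
    rw [card_parentEdges hp]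
    omega

/-- The matrix-tree theorem. Row `i` of the Laplacian minor is `∑ k, x_{ik} (e_i - e_k)`, so
multilinearity expands its determinant over all parent choices `p`. -/
lemma det_eq_treeWeight {m : ℕ} (x : Sym2 (Fin (m + 1)) → ℝ)
    (X : Matrix (Fin (m + 1)) (Fin (m + 1)) ℝ)
    (hX : ∀ i j, X i j = if i = j then 0 else x s(i, j)) :
    ((Matrix.diagonal (fun i => ∑ j, X i j) - X).submatrix Fin.succ Fin.succ).det
      = treeWeight x := by
  have hrow : (Matrix.diagonal (fun i => ∑ j, X i j) - X).submatrix Fin.succ Fin.succ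
      = fun i => ∑ k, X i.succ k •
        (fun j : Fin m => ((if i = j then 1 else 0) - (if k = j.succ then 1 else 0) : ℝ)) := by
    ext i j
    simp only [Matrix.submatrix_apply, Matrix.sub_apply, Matrix.diagonal_apply, Finset.sum_apply,
      Pi.smul_apply, smul_eq_mul, mul_sub, Finset.sum_sub_distrib, Fin.succ_inj]
    congr 1
    · split_ifs <;> simp
    · simp
  have hexp : ((Matrix.diagonal (fun i => ∑ j, X i j) - X).submatrix Fin.succ Fin.succ).det
      = ∑ p : Fin m → Fin (m + 1), (∏ i, X i.succ (p i)) * (parentMatrix p).det := by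
    rw [hrow]
    change Matrix.detRowAlternating.toMultilinearMap _ = _
    rw [MultilinearMap.map_sum]
    apply Finset.sum_congr rfl
    intro p _
    rw [MultilinearMap.map_smul_univ, smul_eq_mul]
    rfl
  have hdet : ∀ p : Fin m → Fin (m + 1), (∏ i, X i.succ (p i)) * (parentMatrix p).det
      = if IsParent p then ∏ e ∈ parentEdges p, x e else 0 := by
    intro p
    split_ifs with hp
    · rw [det_parentMatrix_of_isParent hp, mul_one, parentEdges,
        Finset.prod_image (parentEdge_injective hp).injOn]
      apply Finset.prod_congr rfl
      intro i _
      obtain ⟨h, hh⟩ := hp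
      have : i.succ ≠ p i := fun hi => by
        have := hh i
        rw [← hi] at this
        omega
      rw [hX, if_neg this]
    · rw [det_parentMatrix_of_not_isParent hp, mul_zero]
  rw [hexp, Finset.sum_congr rfl fun p _ => hdet p, ← Finset.sum_filter, treeWeight]
  refine Finset.sum_bij (fun p _ => parentEdges p) ?_ ?_ ?_ fun _ _ => rfl
  · intro p hp
    exact mem_filter.2 ⟨mem_univ _, isSpanningTreeEdgeSet_parentEdges (mem_filter.1 hp).2⟩
  · intro p hp q _ hpq
    exact parentEdges_injOn (mem_filter.1 hp).2 hpq
  · intro T hT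
    obtain ⟨p, hp, hpT⟩ := exists_parentEdges_eq (mem_filter.1 hT).2
    exact ⟨p, mem_filter.2 ⟨mem_univ _, hp⟩, hpT⟩

/-- Nonnegative edge weights on `K_n` (`n ≥ 3`) satisfying all the cut constraints
`x(δ(S)) ≥ 2` (no degree constraints) satisfy
`det(L(X)_{−1}) = Σ_{T∈𝒯_n} ∏_{e∈T} x_e ≥ n`, where `L(X) = D − X` is the Laplacian
of the weighted adjacency matrix `X`. -/
theorem cut_constraints_imply_laplacian_det_eq_treeWeight_ge (n : ℕ) (hn : 3 ≤ n)
    (x : Sym2 (Fin n) → ℝ)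
    (hx0 : ∀ e : Sym2 (Fin n), ¬ e.IsDiag → 0 ≤ x e)
    (hcut : ∀ S : Finset (Fin n), S.Nonempty → S ≠ Finset.univ → 2 ≤ cutSum x S)
    (X : Matrix (Fin n) (Fin n) ℝ)
    (hX : ∀ i j : Fin n, X i j = if i = j then 0 else x s(i, j)) :
    ((Matrix.diagonal (fun i => ∑ j, X i j) - X).submatrix
        (delFirst n (by omega)) (delFirst n (by omega))).det = treeWeight x ∧
    (n : ℝ) ≤ treeWeight x := by
  refine ⟨?_, le_treeWeight (by omega) hx0 hcut⟩
  obtain ⟨m, rfl⟩ : ∃ m, n = m + 1 := ⟨n - 1, by omega⟩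
  exact det_eq_treeWeight x X hX
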